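/- For every integer n ≥ 1, the relations (m−1)^n · A^n B^n = ∏_{i=1}^{n} (m^i·C − b·1) and (m−1)^n · B^n A^n = ∏_{i=0}^{n−1} (m^{−i}·C − b·1) hold in R (the factors commute since they are polynomials in C). -/

import Mathlib

noncomputable section

open FreeAlgebra

/-- The defining relation `A*B = m • (B*A) + b·1` on the free algebra `F⟨A,B⟩`
(the free unital associative algebra on two generators `A = ι F 0`, `B = ι F 1`). -/
def twistRel (F : Type*) [Field F] (m b : F) :
    FreeAlgebra F (Fin 2) → FreeAlgebra F (Fin 2) → Prop :=
  fun p q => p = ι F 0 * ι F 1 ∧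
    q = m • (ι F 1 * ι F 0) + algebraMap F (FreeAlgebra F (Fin 2)) b

/-- `R = F⟨A,B⟩ / (AB − m·BA − b·1)`. -/
abbrev TwistAlg (F : Type*) [Field F] (m b : F) := RingQuot (twistRel F m b)

/-- The image of the generator `A` in `R`. -/
def genA (F : Type*) [Field F] (m b : F) : TwistAlg F m b :=
  RingQuot.mkAlgHom F (twistRel F m b) (ι F 0)

/-- The image of the generator `B` in `R`. -/
def genB (F : Type*) [Field F] (m b : F) : TwistAlg F m b :=
  RingQuot.mkAlgHom F (twistRel F m b) (ι F 1)

/-- `C := A*B − B*A` in `R`. -/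
def genC (F : Type*) [Field F] (m b : F) : TwistAlg F m b :=
  genA F m b * genB F m b - genB F m b * genA F m b

/-!
Let `x * y = m • (y * x) + b • 1` and `c = x * y - y * x`. Then `(m - 1) • (y * x) = c - b • 1`
and `(m - 1) • (x * y) = m • c - b • 1`, and comparing the two ways of bracketing `x * y * x` and
`y * x * y` gives `x * c = m • (c * x)` and `c * y = m • (y * c)`. So in `x ^ n * y ^ n` the
innermost product `x * y` is, up to the factor `m - 1`, affine in `c`, and moving it to the right
past a power of `y` only rescales `c`; the word collapses one layer at a time. The same works for
`y ^ n * x ^ n`.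
-/

section Monoid

variable {M : Type*} [Monoid M] {x y : M} {z : ℕ → M}

theorem semiconjBy_pow_of_forall_semiconjBy_succ
    (hz : ∀ i, SemiconjBy x (z (i + 1)) (z i)) (n : ℕ) : SemiconjBy (x ^ n) (z n) (z 0) := by
  induction n with
  | zero => simp
  | succ n ih => simpa only [pow_succ] using ih.mul_left (hz n)

theorem pow_mul_pow_eq_prod_of_forall_semiconjBy_succ (hyx : y * x = z 0)
    (hz : ∀ i, SemiconjBy x (z (i + 1)) (z i)) (n : ℕ) :
    y ^ n * x ^ n = ((List.range n).map z).prod := by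
  induction n with
  | zero => simp
  | succ n ih =>
    calc y ^ (n + 1) * x ^ (n + 1) = y ^ n * ((y * x) * x ^ n) := by
          simp only [pow_succ y, pow_succ' x, mul_assoc]
      _ = y ^ n * (x ^ n * z n) := by
          rw [hyx, (semiconjBy_pow_of_forall_semiconjBy_succ hz n).eq]
      _ = ((List.range (n + 1)).map z).prod := by
          rw [← mul_assoc, ih, List.prod_range_succ]

end Monoid

section SMul

variable {K R : Type*} [SMul K R]

theorem semiconjBy_smul_right [Mul R] [IsScalarTower K R R] [SMulCommClass K R R] {x u v : R}
    (h : SemiconjBy x u v) (r : K) : SemiconjBy x (r • u) (r • v) := by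
  rw [SemiconjBy, mul_smul_comm, smul_mul_assoc, h.eq]

theorem semiconjBy_smul_one [MulOneClass R] [IsScalarTower K R R] [SMulCommClass K R R]
    (x : R) (r : K) : SemiconjBy x (r • 1) (r • 1) :=
  semiconjBy_smul_right (SemiconjBy.one_right x) r

end SMul

section Algebra

variable {K R : Type*} [CommRing K] [Ring R] [Algebra K R] {m b : K} {x y : R}

theorem commutator_eq_sub_one_smul_add (h : x * y = m • (y * x) + b • 1) :
    x * y - y * x = (m - 1) • (y * x) + b • 1 := by
  rw [h]
  module

theorem smul_commutator_eq_sub_one_smul_add (h : x * y = m • (y * x) + b • 1) :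
    m • (x * y - y * x) = (m - 1) • (x * y) + b • 1 := by
  rw [h]
  module

theorem semiconjBy_commutator_smul (h : x * y = m • (y * x) + b • 1) :
    SemiconjBy x (x * y - y * x) (m • (x * y - y * x)) := by
  rw [smul_commutator_eq_sub_one_smul_add h, commutator_eq_sub_one_smul_add h]
  have hx : SemiconjBy x (y * x) (x * y) := (mul_assoc x y x).symm
  exact (semiconjBy_smul_right hx _).add_right (semiconjBy_smul_one x b)

theorem semiconjBy_smul_commutator (h : x * y = m • (y * x) + b • 1) :
    SemiconjBy y (m • (x * y - y * x)) (x * y - y * x) := by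
  rw [smul_commutator_eq_sub_one_smul_add h, commutator_eq_sub_one_smul_add h]
  have hy : SemiconjBy y (x * y) (y * x) := (mul_assoc y x y).symm
  exact (semiconjBy_smul_right hy _).add_right (semiconjBy_smul_one y b)

theorem sub_one_pow_smul_pow_mul_pow (h : x * y = m • (y * x) + b • 1) (n : ℕ) :
    (m - 1) ^ n • (x ^ n * y ^ n) =
      ((List.range n).map fun i => m ^ (i + 1) • (x * y - y * x) - b • (1 : R)).prod := by
  rw [← smul_mul_assoc, ← smul_pow]
  refine pow_mul_pow_eq_prod_of_forall_semiconjBy_succ ?_ (fun i => ?_) n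
  · rw [smul_mul_assoc, zero_add, pow_one, smul_commutator_eq_sub_one_smul_add h,
      add_sub_cancel_right]
  · rw [pow_succ m (i + 1), mul_smul]
    exact (semiconjBy_smul_right (semiconjBy_smul_commutator h) _).sub_right
      (semiconjBy_smul_one y b)

theorem sub_one_pow_smul_pow_mul_pow_swap {m : Kˣ} (h : x * y = (m : K) • (y * x) + b • 1)
    (n : ℕ) :
    ((m : K) - 1) ^ n • (y ^ n * x ^ n) =
      ((List.range n).map fun i =>
        ((m⁻¹ : Kˣ) : K) ^ i • (x * y - y * x) - b • (1 : R)).prod := by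
  rw [← smul_mul_assoc, ← smul_pow]
  refine pow_mul_pow_eq_prod_of_forall_semiconjBy_succ ?_ (fun i => ?_) n
  · rw [smul_mul_assoc, pow_zero, one_smul, commutator_eq_sub_one_smul_add h,
      add_sub_cancel_right]
  · have hrescale : ((m⁻¹ : Kˣ) : K) ^ i • (x * y - y * x) =
        ((m⁻¹ : Kˣ) : K) ^ (i + 1) • (m : K) • (x * y - y * x) := by
      rw [pow_succ, smul_smul, mul_assoc, Units.inv_mul, mul_one]
    rw [hrescale]
    exact (semiconjBy_smul_right (semiconjBy_commutator_smul h) _).sub_right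
      (semiconjBy_smul_one x b)

theorem stmt15_general {m : Kˣ} (h : x * y = (m : K) • (y * x) + b • 1) (n : ℕ) :
    ((m : K) - 1) ^ n • (x ^ n * y ^ n) =
      ((List.range n).map fun i => (m : K) ^ (i + 1) • (x * y - y * x) - b • (1 : R)).prod ∧
    ((m : K) - 1) ^ n • (y ^ n * x ^ n) =
      ((List.range n).map fun i =>
        ((m⁻¹ : Kˣ) : K) ^ i • (x * y - y * x) - b • (1 : R)).prod :=
  ⟨sub_one_pow_smul_pow_mul_pow h n, sub_one_pow_smul_pow_mul_pow_swap h n⟩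

end Algebra

theorem genA_mul_genB (F : Type*) [Field F] (m b : F) :
    genA F m b * genB F m b = m • (genB F m b * genA F m b) + b • 1 := by
  have hrel := RingQuot.mkAlgHom_rel F (s := twistRel F m b) ⟨rfl, rfl⟩
  simpa only [genA, genB, map_mul, map_add, map_smul, map_one, Algebra.algebraMap_eq_smul_one]
    using hrel

theorem stmt15 (F : Type*) [Field F] (m b : F) (hm0 : m ≠ 0) (hm1 : m ≠ 1)
    (n : ℕ) (hn : 1 ≤ n) :
    (m - 1) ^ n • (genA F m b ^ n * genB F m b ^ n) =
      ((List.range n).map (fun i =>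
        m ^ (i + 1) • genC F m b - b • (1 : TwistAlg F m b))).prod ∧
    (m - 1) ^ n • (genB F m b ^ n * genA F m b ^ n) =
      ((List.range n).map (fun i =>
        m⁻¹ ^ i • genC F m b - b • (1 : TwistAlg F m b))).prod :=
  stmt15_general (m := Units.mk0 m hm0) (genA_mul_genB F m b) n
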